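/- Let τ0 ≤ T ≤ τ1 almost surely with τ0 < ν < μ < τ1 and E(T) = ν, and set Z = (T − μ)/(τ1 − μ) and c0 = (μ − ν)/(μ − τ0). Then E[−Z/(1 − c0·Z)] ≥ 0; that is, the derivative of λ(c) = E[log(1 − c·Z)] at c = c0 is nonnegative. Consequently the concave function λ attains its maximum over [0,1] at some point c_opt with (μ − ν)/(μ − τ0) ≤ c_opt ≤ 1. -/

import Mathlib

open MeasureTheory ProbabilityTheory Filter

/-!
For `0 ≤ c < 1` the function `z ↦ -z / (1 - c z)` is concave on the interval
`[(τ0 - μ) / (τ1 - μ), 1]` containing the values of `Z`, so it lies above its chord; for `c = c0`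
the chord vanishes exactly at `E Z`, whence the sign of the derivative. The tangent line of the
concave function `λ` at `c0` then gives `λ ≤ λ(c0)` on `[0, c0]`. On `[c0, 1]` the function `λ`,
allowed to take the value `-∞` at `1`, is upper semicontinuous by Fatou's lemma and therefore
attains its maximum.
-/

section Pointwise

variable {c l u x y z : ℝ}

lemma one_sub_mul_mem_Icc (hc : 0 ≤ c) (hz : z ∈ Set.Icc l u) :
    1 - c * z ∈ Set.Icc (1 - c * u) (1 - c * l) :=
  ⟨sub_le_sub_left (mul_le_mul_of_nonneg_left hz.2 hc) 1,
    sub_le_sub_left (mul_le_mul_of_nonneg_left hz.1 hc) 1⟩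

lemma one_sub_mul_le_one_add_abs (hc : c ∈ Set.Icc 0 1) (hz : l ≤ z) : 1 - c * z ≤ 1 + |l| := by
  have hcz : c * l ≤ c * z := mul_le_mul_of_nonneg_left hz hc.1
  have hcl : |c * l| ≤ |l| := by
    rw [abs_mul, abs_of_nonneg hc.1]
    exact mul_le_of_le_one_left (abs_nonneg l) hc.2
  linarith [neg_abs_le (c * l)]

lemma neg_div_one_sub_mul_le_of_le (hxy : x ≤ y) (hx : c * x < 1) (hy : c * y < 1) :
    -y / (1 - c * y) ≤ -x / (1 - c * x) := by
  rw [div_le_div_iff₀ (sub_pos.2 hy) (sub_pos.2 hx)]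
  linarith

lemma chord_le_neg_div_one_sub_mul (hc : 0 ≤ c) (hcu : c * u < 1) (hz : z ∈ Set.Icc l u) :
    (c * l * u - z) / ((1 - c * l) * (1 - c * u)) ≤ -z / (1 - c * z) := by
  have hu : 0 < 1 - c * u := sub_pos.2 hcu
  have hz' : 0 < 1 - c * z := hu.trans_le (one_sub_mul_mem_Icc hc hz).1
  have hl : 0 < 1 - c * l := hz'.trans_le (one_sub_mul_mem_Icc hc hz).2
  have hgap : -z / (1 - c * z) - (c * l * u - z) / ((1 - c * l) * (1 - c * u)) =
      c * ((z - l) * (u - z)) / ((1 - c * z) * ((1 - c * l) * (1 - c * u))) := by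
    rw [div_sub_div _ _ hz'.ne' (mul_pos hl hu).ne']
    ring
  rw [← sub_nonneg, hgap]
  exact div_nonneg (mul_nonneg hc (mul_nonneg (sub_nonneg.2 hz.1) (sub_nonneg.2 hz.2)))
    (mul_pos hz' (mul_pos hl hu)).le

lemma sub_div_sub_mem_Icc {a b m : ℝ} (hm : m < b) (hx : x ∈ Set.Icc a b) :
    (x - m) / (b - m) ∈ Set.Icc ((a - m) / (b - m)) 1 := by
  have hbm : 0 < b - m := sub_pos.2 hm
  exact ⟨div_le_div_of_nonneg_right (sub_le_sub_right hx.1 m) hbm.le,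
    (div_le_one hbm).2 (sub_le_sub_right hx.2 m)⟩

lemma log_le_log_add_sub_div (hx : 0 < x) (hy : 0 < y) :
    Real.log y ≤ Real.log x + (y - x) / x := by
  have h := Real.log_le_sub_one_of_pos (div_pos hy hx)
  rw [Real.log_div hy.ne' hx.ne', div_sub_one hx.ne'] at h
  linarith

end Pointwise

section Semicontinuity

variable {Ω X : Type*} [MeasurableSpace Ω] [TopologicalSpace X] [FirstCountableTopology X]
  {P : Measure Ω} {s : Set X}

lemma lowerSemicontinuousOn_lintegral {f : X → Ω → ENNReal} (hf : ∀ x, AEMeasurable (f x) P)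
    (hs : ∀ᵐ ω ∂P, LowerSemicontinuousOn (fun x => f x ω) s) :
    LowerSemicontinuousOn (fun x => ∫⁻ ω, f x ω ∂P) s := by
  refine lowerSemicontinuousOn_iff_le_liminf.2 fun x hx => ?_
  calc ∫⁻ ω, f x ω ∂P
      ≤ ∫⁻ ω, liminf (fun y => f y ω) (nhdsWithin x s) ∂P :=
        lintegral_mono_ae (hs.mono fun ω hω => hω.le_liminf x hx)
    _ ≤ liminf (fun y => ∫⁻ ω, f y ω ∂P) (nhdsWithin x s) := lintegral_liminf_le' hf

end Semicontinuity

/-- The positive part of `log b - log x`, with value `∞` for `x ≤ 0`. It replaces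
`Real.log`, whose values at `x ≤ 0` are junk, when integrating the logarithm of a function bounded
above by `b`: it is continuous in `x`, and Fatou's lemma applies to it. -/
noncomputable def logDeficit (b x : ℝ) : ENNReal :=
  ((Real.log b : EReal) - ENNReal.log (ENNReal.ofReal x)).toENNReal

section LogDeficit

lemma continuous_logDeficit (b : ℝ) : Continuous (logDeficit b) := by
  have hlog : Continuous fun x : ℝ => -ENNReal.log (ENNReal.ofReal x) :=
    continuous_neg.comp (ENNReal.continuous_log.comp ENNReal.continuous_ofReal)
  refine Continuous.ereal_toENNReal (continuous_iff_continuousAt.2 fun x => ?_)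
  have hadd : ContinuousAt (fun p : EReal × EReal => p.1 + p.2)
      ((Real.log b : EReal), -ENNReal.log (ENNReal.ofReal x)) :=
    EReal.continuousAt_add (.inl (EReal.coe_ne_top _)) (.inl (EReal.coe_ne_bot _))
  exact hadd.comp₂ continuousAt_const hlog.continuousAt

lemma logDeficit_of_pos (b : ℝ) {x : ℝ} (hx : 0 < x) :
    logDeficit b x = ENNReal.ofReal (Real.log b - Real.log x) := by
  rw [logDeficit, ENNReal.log_ofReal_of_pos hx, ← EReal.coe_sub, EReal.real_coe_toENNReal]

lemma logDeficit_of_nonpos (b : ℝ) {x : ℝ} (hx : x ≤ 0) : logDeficit b x = ⊤ := by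
  simp [logDeficit, ENNReal.ofReal_of_nonpos hx]

variable {Ω : Type*} [MeasurableSpace Ω] {P : Measure Ω} {f : Ω → ℝ} {b : ℝ}

lemma ae_pos_of_lintegral_logDeficit_ne_top (hf : AEMeasurable f P)
    (h : ∫⁻ ω, logDeficit b (f ω) ∂P ≠ ⊤) : ∀ᵐ ω ∂P, 0 < f ω := by
  have hmeas : AEMeasurable (fun ω => logDeficit b (f ω)) P :=
    (continuous_logDeficit b).measurable.comp_aemeasurable hf
  filter_upwards [ae_lt_top' hmeas h] with ω hω
  by_contra! hle
  exact hω.ne (logDeficit_of_nonpos b hle)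

lemma lintegral_logDeficit_eq_lintegral_ofReal (hpos : ∀ᵐ ω ∂P, 0 < f ω) :
    ∫⁻ ω, logDeficit b (f ω) ∂P = ∫⁻ ω, ENNReal.ofReal (Real.log b - Real.log (f ω)) ∂P :=
  lintegral_congr_ae (hpos.mono fun _ hω => logDeficit_of_pos b hω)

lemma ae_zero_le_log_sub_log (hpos : ∀ᵐ ω ∂P, 0 < f ω) (hb : ∀ᵐ ω ∂P, f ω ≤ b) :
    0 ≤ᵐ[P] fun ω => Real.log b - Real.log (f ω) := by
  filter_upwards [hpos, hb] with ω hω hωb using sub_nonneg.2 (Real.log_le_log hω hωb)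

variable [IsFiniteMeasure P]

lemma lintegral_logDeficit_ne_top_iff (hf : AEMeasurable f P) (hb : ∀ᵐ ω ∂P, f ω ≤ b) :
    ∫⁻ ω, logDeficit b (f ω) ∂P ≠ ⊤ ↔
      (∀ᵐ ω ∂P, 0 < f ω) ∧ Integrable (fun ω => Real.log (f ω)) P := by
  have hiff (hpos : ∀ᵐ ω ∂P, 0 < f ω) : ∫⁻ ω, logDeficit b (f ω) ∂P ≠ ⊤ ↔
      Integrable (fun ω => Real.log (f ω)) P := by
    rw [lintegral_logDeficit_eq_lintegral_ofReal hpos, lintegral_ofReal_ne_top_iff_integrable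
      (hf.log.const_sub _).aestronglyMeasurable (ae_zero_le_log_sub_log hpos hb)]
    simp only [sub_eq_add_neg, integrable_const_add_iff, integrable_fun_neg_iff]
  refine ⟨fun h => ?_, fun h => (hiff h.1).2 h.2⟩
  have hpos := ae_pos_of_lintegral_logDeficit_ne_top hf h
  exact ⟨hpos, (hiff hpos).1 h⟩

lemma integral_log_eq_sub_toReal_lintegral_logDeficit (hpos : ∀ᵐ ω ∂P, 0 < f ω)
    (hb : ∀ᵐ ω ∂P, f ω ≤ b) (hint : Integrable (fun ω => Real.log (f ω)) P) :
    ∫ ω, Real.log (f ω) ∂P =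
      P.real Set.univ * Real.log b - (∫⁻ ω, logDeficit b (f ω) ∂P).toReal := by
  have hsub : Integrable (fun ω => Real.log b - Real.log (f ω)) P := (integrable_const _).sub hint
  rw [lintegral_logDeficit_eq_lintegral_ofReal hpos, ← integral_eq_lintegral_of_nonneg_ae
    (ae_zero_le_log_sub_log hpos hb) hsub.aestronglyMeasurable,
    integral_sub (integrable_const _) hint, integral_const, smul_eq_mul, sub_sub_cancel]

theorem exists_forall_integral_log_le {X : Type*} [TopologicalSpace X] [FirstCountableTopology X]
    {s : Set X} {F : X → Ω → ℝ} (hs : IsCompact s) (hne : s.Nonempty)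
    (hF : ∀ x, AEMeasurable (F x) P) (hcont : ∀ᵐ ω ∂P, ContinuousOn (fun x => F x ω) s)
    (hb : ∀ x ∈ s, ∀ᵐ ω ∂P, F x ω ≤ b) :
    ∃ m ∈ s, ∀ x ∈ s, (∀ᵐ ω ∂P, 0 < F x ω) → Integrable (fun ω => Real.log (F x ω)) P →
      ∫ ω, Real.log (F x ω) ∂P ≤ ∫ ω, Real.log (F m ω) ∂P := by
  have hlsc : LowerSemicontinuousOn (fun x => ∫⁻ ω, logDeficit b (F x ω) ∂P) s :=
    lowerSemicontinuousOn_lintegral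
      (fun x => (continuous_logDeficit b).measurable.comp_aemeasurable (hF x))
      (hcont.mono fun ω hω =>
        ((continuous_logDeficit b).comp_continuousOn hω).lowerSemicontinuousOn)
  obtain ⟨m, hm, hmin⟩ := hlsc.exists_isMinOn hne hs
  refine ⟨m, hm, fun x hx hpos hint => ?_⟩
  have hle : ∫⁻ ω, logDeficit b (F m ω) ∂P ≤ ∫⁻ ω, logDeficit b (F x ω) ∂P := hmin hx
  have hfin : ∫⁻ ω, logDeficit b (F x ω) ∂P ≠ ⊤ :=
    (lintegral_logDeficit_ne_top_iff (hF x) (hb x hx)).2 ⟨hpos, hint⟩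
  obtain ⟨hmpos, hmint⟩ := (lintegral_logDeficit_ne_top_iff (hF m) (hb m hm)).1
    (ne_top_of_le_ne_top hfin hle)
  rw [integral_log_eq_sub_toReal_lintegral_logDeficit hpos (hb x hx) hint,
    integral_log_eq_sub_toReal_lintegral_logDeficit hmpos (hb m hm) hmint]
  exact sub_le_sub_left (ENNReal.toReal_mono hfin hle) _

end LogDeficit

section LogOneSubMul

variable {Ω : Type*} [MeasurableSpace Ω] {P : Measure Ω} {Z : Ω → ℝ} {c c₀ l u : ℝ}

lemma ae_one_sub_mul_pos (hc : 0 ≤ c) (hcu : c * u < 1) (hZu : ∀ᵐ ω ∂P, Z ω ≤ u) :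
    ∀ᵐ ω ∂P, 0 < 1 - c * Z ω := by
  filter_upwards [hZu] with ω hω
  linarith [mul_le_mul_of_nonneg_left hω hc]

variable [IsFiniteMeasure P]

lemma integrable_log_one_sub_mul (hZ : AEMeasurable Z P) (hZb : ∀ᵐ ω ∂P, Z ω ∈ Set.Icc l u)
    (hc : 0 ≤ c) (hcu : c * u < 1) : Integrable (fun ω => Real.log (1 - c * Z ω)) P := by
  refine .of_mem_Icc (Real.log (1 - c * u)) (Real.log (1 - c * l))
    ((hZ.const_mul c).const_sub 1).log ?_
  filter_upwards [hZb] with ω hω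
  obtain ⟨hlower, hupper⟩ := one_sub_mul_mem_Icc hc hω
  have hu : 0 < 1 - c * u := sub_pos.2 hcu
  exact ⟨Real.log_le_log hu hlower, Real.log_le_log (hu.trans_le hlower) hupper⟩

lemma integrable_neg_div_one_sub_mul (hZ : AEMeasurable Z P) (hZb : ∀ᵐ ω ∂P, Z ω ∈ Set.Icc l u)
    (hc : 0 ≤ c) (hcu : c * u < 1) : Integrable (fun ω => -Z ω / (1 - c * Z ω)) P := by
  refine .of_mem_Icc (-u / (1 - c * u)) (-l / (1 - c * l))
    (hZ.neg.div ((hZ.const_mul c).const_sub 1)) ?_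
  filter_upwards [hZb] with ω hω
  have hcZ : c * Z ω < 1 := (mul_le_mul_of_nonneg_left hω.2 hc).trans_lt hcu
  have hcl : c * l < 1 := (mul_le_mul_of_nonneg_left hω.1 hc).trans_lt hcZ
  exact ⟨neg_div_one_sub_mul_le_of_le hω.2 hcZ hcu, neg_div_one_sub_mul_le_of_le hω.1 hcl hcZ⟩

theorem integral_log_one_sub_mul_le_add_mul (hZ : AEMeasurable Z P)
    (hZb : ∀ᵐ ω ∂P, Z ω ∈ Set.Icc l u) (hc : 0 ≤ c) (hcu : c * u < 1) (hc₀ : 0 ≤ c₀)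
    (hc₀u : c₀ * u < 1) :
    ∫ ω, Real.log (1 - c * Z ω) ∂P ≤
      ∫ ω, Real.log (1 - c₀ * Z ω) ∂P + (c - c₀) * ∫ ω, -Z ω / (1 - c₀ * Z ω) ∂P := by
  have hlog := integrable_log_one_sub_mul hZ hZb hc₀ hc₀u
  have hderiv := (integrable_neg_div_one_sub_mul hZ hZb hc₀ hc₀u).const_mul (c - c₀)
  have hZu : ∀ᵐ ω ∂P, Z ω ≤ u := hZb.mono fun _ hω => hω.2
  rw [← integral_const_mul, ← integral_add hlog hderiv]
  refine integral_mono_ae (integrable_log_one_sub_mul hZ hZb hc hcu) (hlog.add hderiv) ?_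
  filter_upwards [ae_one_sub_mul_pos hc hcu hZu, ae_one_sub_mul_pos hc₀ hc₀u hZu] with ω hω hω₀
  refine (log_le_log_add_sub_div hω₀ hω).trans_eq ?_
  ring

theorem exists_mem_Icc_forall_integral_log_one_sub_mul_le (hZ : AEMeasurable Z P)
    (hZb : ∀ᵐ ω ∂P, Z ω ∈ Set.Icc l 1) (hc₀ : 0 ≤ c₀) (hc₀1 : c₀ < 1)
    (hderiv : 0 ≤ ∫ ω, -Z ω / (1 - c₀ * Z ω) ∂P) :
    ∃ m ∈ Set.Icc c₀ 1, ∀ c ∈ Set.Icc (0 : ℝ) 1,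
      ∫ ω, Real.log (1 - c * Z ω) ∂P ≤ ∫ ω, Real.log (1 - m * Z ω) ∂P := by
  set lam : ℝ → ℝ := fun c => ∫ ω, Real.log (1 - c * Z ω) ∂P
  obtain ⟨m, hm, hmax⟩ := exists_forall_integral_log_le (P := P) (F := fun c ω => 1 - c * Z ω)
    (b := 1 + |l|) isCompact_Icc (Set.nonempty_Icc.2 hc₀1.le)
    (fun c => (hZ.const_mul c).const_sub 1) (.of_forall fun ω => by fun_prop)
    (fun c hc => hZb.mono fun ω hω => one_sub_mul_le_one_add_abs ⟨hc₀.trans hc.1, hc.2⟩ hω.1)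
  have hright : ∀ c ∈ Set.Ico c₀ 1, lam c ≤ lam m := fun c hc =>
    have hc0 : 0 ≤ c := hc₀.trans hc.1
    have hc1 : c * 1 < 1 := by simpa only [mul_one] using hc.2
    hmax c (Set.Ico_subset_Icc_self hc)
      (ae_one_sub_mul_pos hc0 hc1 (hZb.mono fun _ hω => hω.2))
      (integrable_log_one_sub_mul hZ hZb hc0 hc1)
  have hleft : ∀ c ∈ Set.Icc 0 c₀, lam c ≤ lam c₀ := fun c hc => by
    have htangent := integral_log_one_sub_mul_le_add_mul hZ hZb hc.1
      (by linarith [hc.2]) hc₀ (by linarith)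
    exact htangent.trans (add_le_of_nonpos_right
      (mul_nonpos_of_nonpos_of_nonneg (sub_nonpos.2 hc.2) hderiv))
  have hlt : ∀ c ∈ Set.Ico (0 : ℝ) 1, lam c ≤ lam m := fun c hc => by
    rcases le_total c c₀ with h | h
    · exact (hleft c ⟨hc.1, h⟩).trans (hright c₀ ⟨le_rfl, hc₀1⟩)
    · exact hright c ⟨h, hc.2⟩
  -- If `E log (1 - Z) = -∞`, then `lam 1` is a junk value that may exceed `lam m`; in that case the
  -- maximum is attained at `1`.
  rcases le_total (lam 1) (lam m) with h | h
  · refine ⟨m, hm, fun c hc => ?_⟩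
    rcases hc.2.eq_or_lt with rfl | hc1
    exacts [h, hlt c ⟨hc.1, hc1⟩]
  · refine ⟨1, ⟨hc₀1.le, le_rfl⟩, fun c hc => ?_⟩
    rcases hc.2.eq_or_lt with rfl | hc1
    exacts [le_rfl, (hlt c ⟨hc.1, hc1⟩).trans h]

end LogOneSubMul

section Derivative

variable {Ω : Type*} [MeasurableSpace Ω] {P : Measure Ω} [IsProbabilityMeasure P] {Z : Ω → ℝ}
  {c l u : ℝ}

theorem chord_le_integral_neg_div_one_sub_mul (hZ : AEMeasurable Z P)
    (hZb : ∀ᵐ ω ∂P, Z ω ∈ Set.Icc l u) (hc : 0 ≤ c) (hcu : c * u < 1) :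
    (c * l * u - ∫ ω, Z ω ∂P) / ((1 - c * l) * (1 - c * u)) ≤
      ∫ ω, -Z ω / (1 - c * Z ω) ∂P := by
  have hZi : Integrable Z P := .of_mem_Icc l u hZ hZb
  have hchord : Integrable (fun ω => (c * l * u - Z ω) / ((1 - c * l) * (1 - c * u))) P :=
    ((integrable_const _).sub hZi).div_const _
  calc (c * l * u - ∫ ω, Z ω ∂P) / ((1 - c * l) * (1 - c * u))
      = ∫ ω, (c * l * u - Z ω) / ((1 - c * l) * (1 - c * u)) ∂P := by
        rw [integral_div, integral_sub (integrable_const _) hZi, integral_const, probReal_univ,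
          one_smul]
    _ ≤ ∫ ω, -Z ω / (1 - c * Z ω) ∂P :=
        integral_mono_ae hchord (integrable_neg_div_one_sub_mul hZ hZb hc hcu)
          (hZb.mono fun _ hω => chord_le_neg_div_one_sub_mul hc hcu hω)

theorem integral_neg_div_one_sub_mul_nonneg (hZ : AEMeasurable Z P)
    (hZb : ∀ᵐ ω ∂P, Z ω ∈ Set.Icc l u) (hc : 0 ≤ c) (hcu : c * u < 1)
    (hmean : ∫ ω, Z ω ∂P ≤ c * l * u) : 0 ≤ ∫ ω, -Z ω / (1 - c * Z ω) ∂P := by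
  obtain ⟨ω, hω⟩ := hZb.exists
  have hcl : c * l < 1 := (mul_le_mul_of_nonneg_left (hω.1.trans hω.2) hc).trans_lt hcu
  exact (div_nonneg (sub_nonneg.2 hmean) (mul_pos (sub_pos.2 hcl) (sub_pos.2 hcu)).le).trans
    (chord_le_integral_neg_div_one_sub_mul hZ hZb hc hcu)

end Derivative

/-- part of Lemma 4: with `Z = (T − μ)/(τ1 − μ)` and
`c0 = (μ − ν)/(μ − τ0)`, the derivative of `λ` at `c0` is nonnegative,
`E[−Z/(1 − c0·Z)] ≥ 0`, and consequently `λ(c) = E[log(1 − c·Z)]` attains its maximum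
over `[0,1]` at some point `c_opt` with `c0 ≤ c_opt ≤ 1`. -/
theorem stmt11 {Ω : Type*} [MeasurableSpace Ω] (P : Measure Ω) [IsProbabilityMeasure P]
    (τ0 τ1 ν μ : ℝ) (h0ν : τ0 < ν) (hνμ : ν < μ) (hμ1 : μ < τ1)
    (T : Ω → ℝ) (hTint : Integrable T P) (hTbd : ∀ᵐ ω ∂P, T ω ∈ Set.Icc τ0 τ1)
    (hTmean : ∫ ω, T ω ∂P = ν)
    (Z : Ω → ℝ) (hZ : ∀ ω, Z ω = (T ω - μ) / (τ1 - μ))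
    (c0 : ℝ) (hc0 : c0 = (μ - ν) / (μ - τ0))
    (lam : ℝ → ℝ) (hlam : ∀ c, lam c = ∫ ω, Real.log (1 - c * Z ω) ∂P) :
    0 ≤ ∫ ω, -Z ω / (1 - c0 * Z ω) ∂P ∧
      ∃ copt ∈ Set.Icc c0 1, ∀ c ∈ Set.Icc (0 : ℝ) 1, lam c ≤ lam copt := by
  have hτ1 : 0 < τ1 - μ := sub_pos.2 hμ1
  have hτ0 : 0 < μ - τ0 := by linarith
  have hc0_nonneg : 0 ≤ c0 := hc0 ▸ div_nonneg (sub_nonneg.2 hνμ.le) hτ0.le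
  have hc0_lt : c0 < 1 := by rw [hc0, div_lt_one hτ0]; linarith
  have hZ_eq : Z = fun ω => (T ω - μ) / (τ1 - μ) := funext hZ
  have hZ_meas : AEMeasurable Z P := hZ_eq ▸ (hTint.aemeasurable.sub_const μ).div_const _
  have hZ_mem : ∀ᵐ ω ∂P, Z ω ∈ Set.Icc ((τ0 - μ) / (τ1 - μ)) 1 := by
    filter_upwards [hTbd] with ω hω using hZ ω ▸ sub_div_sub_mem_Icc hμ1 hω
  have hZ_mean : ∫ ω, Z ω ∂P = c0 * ((τ0 - μ) / (τ1 - μ)) * 1 := by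
    rw [hZ_eq, integral_div, integral_sub hTint (integrable_const μ), hTmean, integral_const,
      probReal_univ, one_smul, hc0]
    field_simp
    ring
  have hderiv : 0 ≤ ∫ ω, -Z ω / (1 - c0 * Z ω) ∂P :=
    integral_neg_div_one_sub_mul_nonneg hZ_meas hZ_mem hc0_nonneg (by rwa [mul_one]) hZ_mean.le
  simp only [hlam]
  exact ⟨hderiv, exists_mem_Icc_forall_integral_log_one_sub_mul_le hZ_meas hZ_mem hc0_nonneg hc0_lt
    hderiv⟩
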